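/- Let n and K be positive integers with n ≤ K, and let F be a uniformly random injective function from Fin n to Fin K (i.e., F is drawn from the uniform probability measure on the finite set of all injections Fin n → Fin K). Let σ_F be the rank permutation of F, i.e., the unique permutation π of Fin n such that the composition F ∘ π⁻¹ is strictly increasing. Then σ_F is uniformly distributed on the symmetric group on Fin n: for every permutation π of Fin n, the probability that σ_F = π equals 1/n!. -/

import Mathlib

/-!
Precomposing the keys with a permutation `σ` multiplies the rank permutation by `σ` on the right.
If the law of the keys is exchangeable, the law of the rank permutation is therefore invariant under
right translations of the symmetric group, and the only such law on a finite group is the uniform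
one. The uniform law on injections is exchangeable because precomposition with `σ` is a bijection.
-/

open Equiv Function

section UniformLaws

variable {α β : Type*}

theorem pmf_map_apply_of_injective {f : α → β} (hf : Injective f) (p : PMF α) (a : α) :
    p.map f (f a) = p a := by
  rw [← PMF.toOuterMeasure_apply_singleton, PMF.toOuterMeasure_map_apply, ← Set.image_singleton,
    hf.preimage_image, PMF.toOuterMeasure_apply_singleton]

theorem pmf_eq_uniformOfFintype_of_forall_eq [Fintype α] [Nonempty α] {p : PMF α}
    (hp : ∀ a b, p a = p b) : p = PMF.uniformOfFintype α := by
  ext a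
  have mul_card : p a * Fintype.card α = 1 := by
    calc p a * Fintype.card α = ∑ b, p b := by simp [hp _ a, mul_comm]
      _ = 1 := by rw [← p.tsum_coe, tsum_fintype]
  rw [PMF.uniformOfFintype_apply, ENNReal.eq_inv_of_mul_eq_one_left mul_card]

theorem map_equiv_uniformOfFintype [Fintype α] [Nonempty α] [Fintype β] [Nonempty β] (e : α ≃ β) :
    (PMF.uniformOfFintype α).map e = PMF.uniformOfFintype β := by
  refine pmf_eq_uniformOfFintype_of_forall_eq (e.surjective.forall₂.mpr fun a b => ?_)
  simp only [pmf_map_apply_of_injective e.injective, PMF.uniformOfFintype_apply]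

theorem pmf_eq_uniformOfFintype_of_map_mul_right_eq_self {G : Type*} [Group G] [Fintype G]
    {p : PMF G} (hp : ∀ g, p.map (· * g) = p) : p = PMF.uniformOfFintype G := by
  have apply_eq_apply_one (g : G) : p g = p 1 := by
    calc p g = p.map (· * g) (1 * g) := by rw [hp, one_mul]
      _ = p 1 := pmf_map_apply_of_injective (mul_left_injective g) p 1
  exact pmf_eq_uniformOfFintype_of_forall_eq fun g h => by
    rw [apply_eq_apply_one g, apply_eq_apply_one h]

end UniformLaws

section RankPerm

variable {n : ℕ} {β : Type*} [LinearOrder β] {f : Fin n → β}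

/-- The rank permutation of a tuple of keys, sending each index to its position in the sorted order.
It is the inverse of `Tuple.sort`, which sends each position to the index placed there; ties are
broken by index. -/
def rankPerm (f : Fin n → β) : Perm (Fin n) :=
  (Tuple.sort f)⁻¹

theorem strictMono_comp_perm_iff_eq_sort (hf : Injective f) {σ : Perm (Fin n)} :
    StrictMono (f ∘ σ) ↔ σ = Tuple.sort f := by
  rw [← hf.comp_left.eq_iff.trans DFunLike.coe_injective.eq_iff,
    Tuple.comp_sort_eq_comp_iff_monotone]
  exact ⟨StrictMono.monotone, fun h => h.strictMono_of_injective (hf.comp σ.injective)⟩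

theorem strictMono_comp_inv_iff_rankPerm_eq (hf : Injective f) {π : Perm (Fin n)} :
    StrictMono (f ∘ ⇑π⁻¹) ↔ rankPerm f = π := by
  rw [strictMono_comp_perm_iff_eq_sort hf, rankPerm, inv_eq_iff_eq_inv, eq_comm]

theorem rankPerm_comp_perm (hf : Injective f) (σ : Perm (Fin n)) :
    rankPerm (f ∘ σ) = rankPerm f * σ := by
  rw [← strictMono_comp_inv_iff_rankPerm_eq (hf.comp σ.injective)]
  have comp_cancel : (f ∘ σ) ∘ ⇑(rankPerm f * σ)⁻¹ = f ∘ ⇑(rankPerm f)⁻¹ := by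
    ext i
    simp
  rw [comp_cancel, strictMono_comp_inv_iff_rankPerm_eq hf]

end RankPerm

section Exchangeable

/-- Exchangeability of a random family of distinct keys: relabelling the indices by any permutation
does not change the law. -/
def IsExchangeable {ι β : Type*} (p : PMF (ι ↪ β)) : Prop :=
  ∀ σ : Perm ι, p.map (σ.toEmbedding.trans ·) = p

theorem isExchangeable_uniformOfFintype {ι β : Type*} [Fintype (ι ↪ β)] [Nonempty (ι ↪ β)] :
    IsExchangeable (PMF.uniformOfFintype (ι ↪ β)) :=
  fun σ => map_equiv_uniformOfFintype (σ.symm.embeddingCongr (Equiv.refl β))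

variable {n : ℕ} {β : Type*} [LinearOrder β] {p : PMF (Fin n ↪ β)}

theorem IsExchangeable.map_rankPerm (hp : IsExchangeable p) :
    p.map (fun F : Fin n ↪ β => rankPerm F) = PMF.uniformOfFintype (Perm (Fin n)) := by
  refine pmf_eq_uniformOfFintype_of_map_mul_right_eq_self fun σ => ?_
  have rankPerm_relabel (F : Fin n ↪ β) : rankPerm (σ.toEmbedding.trans F) = rankPerm F * σ :=
    rankPerm_comp_perm F.injective σ
  calc (p.map fun F : Fin n ↪ β => rankPerm F).map (· * σ)
      = p.map fun F : Fin n ↪ β => rankPerm F * σ := PMF.map_comp ..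
    _ = p.map fun F : Fin n ↪ β => rankPerm (σ.toEmbedding.trans F) := by
      simp only [rankPerm_relabel]
    _ = (p.map (σ.toEmbedding.trans ·)).map fun F : Fin n ↪ β => rankPerm F := by
      rw [PMF.map_comp, comp_def]
    _ = p.map fun F : Fin n ↪ β => rankPerm F := by rw [hp σ]

theorem uniform_random_injection_rank_perm_uniform_general (hp : IsExchangeable p)
    (π : Perm (Fin n)) :
    p.toOuterMeasure {F : Fin n ↪ β | StrictMono (⇑F ∘ ⇑π⁻¹)} =
      1 / (Nat.factorial n : ENNReal) := by
  have event_eq : {F : Fin n ↪ β | StrictMono (⇑F ∘ ⇑π⁻¹)} =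
      (fun F : Fin n ↪ β => rankPerm F) ⁻¹' {π} :=
    Set.ext fun F => strictMono_comp_inv_iff_rankPerm_eq F.injective
  rw [event_eq, ← PMF.toOuterMeasure_map_apply, hp.map_rankPerm,
    PMF.toOuterMeasure_apply_singleton, PMF.uniformOfFintype_apply, Fintype.card_perm,
    Fintype.card_fin, one_div]

end Exchangeable

/-- Shuffling by sorting via uniformly random (injective) keys produces a uniformly
random permutation: if `F : Fin n ↪ Fin K` is drawn uniformly at random from the
injections (`n ≤ K`), then for every permutation `π` of `Fin n`, the probability that
the rank permutation of `F` equals `π` — i.e., that `F ∘ π⁻¹` is strictly increasing —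
is exactly `1 / n!`. -/
theorem uniform_random_injection_rank_perm_uniform
    (n K : ℕ) (hn : 0 < n) (hK : n ≤ K) (π : Equiv.Perm (Fin n)) :
    (@PMF.uniformOfFintype (Fin n ↪ Fin K) _
        ⟨Fin.castLEEmb hK⟩).toOuterMeasure
      {F : Fin n ↪ Fin K | StrictMono (⇑F ∘ ⇑π⁻¹)}
      = 1 / (Nat.factorial n : ENNReal) := by
  have : Nonempty (Fin n ↪ Fin K) := ⟨Fin.castLEEmb hK⟩
  exact uniform_random_injection_rank_perm_uniform_general isExchangeable_uniformOfFintype π
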